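/- For every cap body K in Euclidean 3-space, the illumination number of K is at most 6. -/

import Mathlib

open Metric Real Set

noncomputable section

/-- A unit vector `v` illuminates the boundary point `p` of `K` if moving from `p`
in direction `v` enters the interior of `K`. A finite set `V` of unit vectors
illuminates `K` if every boundary point is illuminated by some member of `V`.
The illumination number is the least cardinality of such a set. -/
def illumNum (K : Set (EuclideanSpace ℝ (Fin 3))) : ℕ :=
  sInf {n : ℕ | ∃ V : Finset (EuclideanSpace ℝ (Fin 3)), V.card = n ∧
    (∀ v ∈ V, ‖v‖ = 1) ∧
    ∀ p ∈ frontier K, ∃ v ∈ V, ∃ t : ℝ, 0 < t ∧ p + t • v ∈ interior K}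

/-!
Discard redundant vertices. As `K` is convex, any two remaining vertices are joined by a segment
that meets the unit ball, so the caps of the sphere visible from the vertices have disjoint
interiors. Comparing the cones over these caps with the ball, the caps satisfy
`∑ (1 - 1 / ‖x i‖) ≤ 2`.

A set of unit vectors `w` such that every open half-space bounded by a plane through the origin
contains some `w`, and such that for every vertex some `w` satisfies `√(‖x i‖ ^ 2 - 1) < ⟪w, x i⟫`,
yields the illuminating set of the vectors `-w`. Take as axis the line through the farthest vertex,
as two of the vectors the unit vectors of the axis, and as the other four vectors at a common angle
from the axis, which depends on the largest cap, with azimuths `β + k π / 2` for `k = 0, 1, 2, 3`.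
Each remaining vertex is taken care of unless `β` falls into a certain arc of the circle of
azimuths modulo `π / 2`. The area inequality bounds the total length of these arcs by less than the
length of the circle, so a good `β` exists.
-/

section Spikes

variable {E : Type*} [NormedAddCommGroup E] [NormedSpace ℝ E] {y z : E}

/-- The convex hull of a point and the closed unit ball. A cap body is a convex finite union of
spikes over points outside the ball. -/
def spike (y : E) : Set E :=
  convexHull ℝ ({y} ∪ closedBall 0 1)

lemma convex_spike : Convex ℝ (spike y) :=
  convex_convexHull ℝ _

lemma self_mem_spike : y ∈ spike y :=
  subset_convexHull ℝ _ (Or.inl rfl)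

lemma closedBall_subset_spike : closedBall 0 1 ⊆ spike y :=
  subset_union_right.trans (subset_convexHull ℝ _)

lemma spike_subset_spike (h : y ∈ spike z) : spike y ⊆ spike z :=
  convexHull_min (union_subset (singleton_subset_iff.2 h) closedBall_subset_spike) convex_spike

lemma mem_spike_iff {c : E} : c ∈ spike y ↔ ∃ b ∈ closedBall (0 : E) 1, c ∈ segment ℝ y b := by
  rw [spike, singleton_union, convexHull_insert (by simp), (convex_closedBall _ _).convexHull_eq,
    mem_convexJoin]
  simp

lemma isClosed_spike [ProperSpace E] : IsClosed (spike y) := by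
  have image_eq : spike y =
      (fun r : ℝ × E ↦ AffineMap.lineMap y r.2 r.1) '' (Icc 0 1 ×ˢ closedBall 0 1) := by
    ext c
    simp only [mem_spike_iff, segment_eq_image_lineMap, mem_image, Prod.exists, mem_prod]
    grind
  rw [image_eq]
  refine ((isCompact_Icc.prod (isCompact_closedBall _ _)).image ?_).isClosed
  simp only [AffineMap.lineMap_apply_module]
  fun_prop

/-- The point `c` lies on the segments from `y` to `z` and from `y` to some `b` in the ball, so `b`
and `z` are on one ray from `y`; as `z` is not between `y` and `b`, it lies beyond `b`. -/
lemma openSegment_inter_closedBall_nonempty {c : E} (hc : c ∈ openSegment ℝ y z)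
    (hcy : c ∈ spike y) (hz : z ∉ spike y) :
    (openSegment ℝ y z ∩ closedBall 0 1).Nonempty := by
  obtain ⟨b, hb, hcb⟩ := mem_spike_iff.1 hcy
  rw [openSegment_eq_image_lineMap] at hc ⊢
  rw [segment_eq_image_lineMap] at hcb
  obtain ⟨t, ⟨t_pos, _⟩, rfl⟩ := hc
  obtain ⟨s, ⟨s_nonneg, _⟩, hs⟩ := hcb
  have same_point : s • (b - y) = t • (z - y) := by
    simpa [AffineMap.lineMap_apply] using hs
  have z_ne_y : z - y ≠ 0 := fun h ↦ hz (by rw [sub_eq_zero.1 h]; exact self_mem_spike)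
  have s_pos : 0 < s := by
    refine s_nonneg.lt_of_ne fun h ↦ smul_ne_zero t_pos.ne' z_ne_y ?_
    rw [← same_point, ← h, zero_smul]
  have t_lt_s : t < s := by
    by_contra! h
    have hz_eq : AffineMap.lineMap y b (s / t) = z := by
      rw [AffineMap.lineMap_apply, vsub_eq_sub, div_eq_inv_mul, mul_smul, same_point,
        inv_smul_smul₀ t_pos.ne']
      simp
    refine hz (mem_spike_iff.2 ⟨b, hb, ?_⟩)
    rw [segment_eq_image_lineMap]
    exact ⟨s / t, ⟨by positivity, (div_le_one t_pos).2 h⟩, hz_eq⟩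
  have hb_eq : AffineMap.lineMap y z (t / s) = b := by
    rw [AffineMap.lineMap_apply, vsub_eq_sub, div_eq_inv_mul, mul_smul, ← same_point,
      inv_smul_smul₀ s_pos.ne']
    simp
  exact ⟨b, ⟨t / s, ⟨by positivity, (div_lt_one s_pos).2 t_lt_s⟩, hb_eq⟩, hb⟩

end Spikes

section Irredundant

variable {E ι : Type*} [NormedAddCommGroup E] [NormedSpace ℝ E]

lemma exists_irredundant_biUnion_eq_iUnion {α : Type*} [Finite ι] (f : ι → Set α) :
    ∃ S : Finset ι, ⋃ i ∈ S, f i = ⋃ i, f i ∧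
      (S : Set ι).Pairwise fun i j ↦ ¬ f i ⊆ f j := by
  classical
  cases nonempty_fintype ι
  obtain ⟨S, hS, hmin⟩ := exists_minimal_of_wellFoundedLT
    (fun S : Finset ι ↦ ⋃ i ∈ S, f i = ⋃ i, f i) ⟨Finset.univ, by simp⟩
  refine ⟨S, hS, fun i hi j hj hij hsub ↦ ?_⟩
  have cover_erase : ⋃ k ∈ S.erase i, f k = ⋃ k, f k := by
    refine subset_antisymm (iUnion₂_subset_iUnion _ _) (hS ▸ iUnion₂_subset fun k hk ↦ ?_)
    by_cases hki : k = i
    · exact hki ▸ hsub.trans (subset_biUnion_of_mem (u := f) (Finset.mem_erase.2 ⟨hij.symm, hj⟩))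
    · exact subset_biUnion_of_mem (u := f) (Finset.mem_erase.2 ⟨hki, hk⟩)
  exact Finset.notMem_erase i S (hmin cover_erase (Finset.erase_subset i S) hi)

lemma pairwise_openSegment_inter_closedBall_nonempty [ProperSpace E] {S : Finset ι} {x : ι → E}
    (hconv : Convex ℝ (⋃ i ∈ S, spike (x i)))
    (hirr : (S : Set ι).Pairwise fun i j ↦ ¬ spike (x i) ⊆ spike (x j)) :
    (S : Set ι).Pairwise fun i j ↦ (openSegment ℝ (x i) (x j) ∩ closedBall 0 1).Nonempty := by
  classical
  intro i hi j hj hij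
  have notMem_spike : ∀ k ∈ S, ∀ l ∈ S, k ≠ l → x k ∉ spike (x l) := fun k hk l hl hkl h ↦
    hirr hk hl hkl (spike_subset_spike h)
  have mem_union : ∀ k ∈ S, x k ∈ ⋃ i ∈ S, spike (x i) := fun k hk ↦
    mem_biUnion hk self_mem_spike
  let others : Set E := ⋃ k ∈ S.erase i, spike (x k)
  have others_compl_mem_nhds : othersᶜ ∈ nhds (x i) := by
    refine (isClosed_biUnion_finset fun k _ ↦ isClosed_spike).isOpen_compl.mem_nhds ?_
    simp only [mem_compl_iff, mem_iUnion, not_exists]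
    exact fun k hk ↦
      notMem_spike i hi k (Finset.mem_of_mem_erase hk) (Finset.ne_of_mem_erase hk).symm
  have x_mem_closure : x i ∈ closure (openSegment ℝ (x i) (x j)) := by
    rw [closure_openSegment]
    exact left_mem_segment ℝ _ _
  obtain ⟨c, hc_others, hc⟩ := mem_closure_iff_nhds.1 x_mem_closure _ others_compl_mem_nhds
  have hc_spike : c ∈ spike (x i) := by
    obtain ⟨k, hk, hck⟩ := mem_iUnion₂.1 <| hconv.segment_subset (mem_union i hi) (mem_union j hj)
      (openSegment_subset_segment ℝ _ _ hc)
    obtain rfl : k = i := by_contra fun hki ↦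
      hc_others (mem_biUnion (Finset.mem_erase.2 ⟨hki, hk⟩) hck)
    exact hck
  exact openSegment_inter_closedBall_nonempty hc hc_spike (notMem_spike j hj i hi hij.symm)

end Irredundant

section TangentLength

variable {E : Type*} [NormedAddCommGroup E] {y : E}

/-- The length of a tangent segment from `y` to the unit ball. It is `0` if `‖y‖ ≤ 1`. -/
def tangentLength (y : E) : ℝ :=
  √(‖y‖ ^ 2 - 1)

lemma tangentLength_nonneg : 0 ≤ tangentLength y :=
  Real.sqrt_nonneg _

lemma sq_tangentLength (hy : 1 ≤ ‖y‖) : tangentLength y ^ 2 = ‖y‖ ^ 2 - 1 :=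
  Real.sq_sqrt (by nlinarith)

lemma tangentLength_lt_norm (hy : 1 ≤ ‖y‖) : tangentLength y < ‖y‖ :=
  lt_of_pow_lt_pow_left₀ 2 (norm_nonneg y) (by linarith [sq_tangentLength hy])

lemma tangentLength_lt_iff_of_norm_eq_one {r : ℝ} (hy : ‖y‖ = 1) :
    tangentLength y < r ↔ 0 < r := by
  simp [tangentLength, hy]

end TangentLength

section Illumination

variable {E : Type*} [NormedAddCommGroup E] [InnerProductSpace ℝ E] {w y : E}

lemma norm_sub_inner_smul_lt_one (hw : ‖w‖ = 1) (hwy : tangentLength y < inner ℝ w y) :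
    ‖y - inner ℝ w y • w‖ < 1 := by
  have inner_pos : 0 < inner ℝ w y := tangentLength_nonneg.trans_lt hwy
  have norm_sq_sub : ‖y - inner ℝ w y • w‖ ^ 2 = ‖y‖ ^ 2 - inner ℝ w y ^ 2 := by
    rw [norm_sub_sq_real, norm_smul, hw, inner_smul_right, real_inner_comm w y, Real.norm_eq_abs,
      mul_one, sq_abs]
    ring
  have := (Real.sqrt_lt' inner_pos).1 hwy
  exact (sq_lt_one_iff₀ (norm_nonneg _)).1 (by linarith)

lemma exists_smul_neg_add_mem_ball {b : E} {s : ℝ} (hb : ‖b‖ ≤ 1) (hs₀ : 0 ≤ s) (hs₁ : s < 1)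
    (hw : ‖w‖ = 1) (hwy : tangentLength y < inner ℝ w y) :
    ∃ t : ℝ, 0 < t ∧ AffineMap.lineMap y b s + t • -w ∈ ball 0 1 := by
  have inner_pos : 0 < inner ℝ w y := tangentLength_nonneg.trans_lt hwy
  refine ⟨(1 - s) * inner ℝ w y, mul_pos (by linarith) inner_pos, ?_⟩
  rw [mem_ball_zero_iff]
  calc ‖AffineMap.lineMap y b s + ((1 - s) * inner ℝ w y) • -w‖
      = ‖(1 - s) • (y - inner ℝ w y • w) + s • b‖ := by
        rw [AffineMap.lineMap_apply_module]; congr 1; module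
    _ ≤ ‖(1 - s) • (y - inner ℝ w y • w)‖ + ‖s • b‖ := norm_add_le _ _
    _ = (1 - s) * ‖y - inner ℝ w y • w‖ + s * ‖b‖ := by
        rw [norm_smul_of_nonneg (by linarith), norm_smul_of_nonneg hs₀]
    _ < 1 := by nlinarith [norm_sub_inner_smul_lt_one hw hwy]

/-- A homothety centred at a point `b` of the ball carries a ray from the apex that meets the open
ball to rays from all points of the half-open segment from the apex to `b`. What remains are the
boundary points on the sphere. -/
lemma exists_illuminating_of_mem_frontier {ι : Type*} [ProperSpace E] {S : Finset ι} {x : ι → E}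
    {W : Finset E} (hW : ∀ w ∈ W, ‖w‖ = 1)
    (hvertex : ∀ i ∈ S, ∃ w ∈ W, tangentLength (x i) < inner ℝ w (x i))
    (hsphere : ∀ u : E, u ≠ 0 → ∃ w ∈ W, 0 < inner ℝ w u) {p : E}
    (hp : p ∈ frontier (⋃ i ∈ S, spike (x i))) :
    ∃ w ∈ W, ∃ t : ℝ, 0 < t ∧ p + t • -w ∈ interior (⋃ i ∈ S, spike (x i)) := by
  have isClosed_union : IsClosed (⋃ i ∈ S, spike (x i)) :=
    isClosed_biUnion_finset fun _ _ ↦ isClosed_spike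
  obtain ⟨i, hi, hpi⟩ := mem_iUnion₂.1 (isClosed_union.frontier_subset hp)
  have ball_subset : ball 0 1 ⊆ interior (⋃ i ∈ S, spike (x i)) :=
    interior_maximal (ball_subset_closedBall.trans <|
      closedBall_subset_spike.trans (subset_biUnion_of_mem (u := fun i ↦ spike (x i)) hi))
      isOpen_ball
  obtain ⟨b, hb, hpb⟩ := mem_spike_iff.1 hpi
  rw [mem_closedBall_zero_iff] at hb
  rw [segment_eq_image_lineMap] at hpb
  obtain ⟨s, ⟨hs₀, hs₁⟩, rfl⟩ := hpb
  rcases hs₁.lt_or_eq with hs₁ | rfl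
  · obtain ⟨w, hw, hwx⟩ := hvertex i hi
    obtain ⟨t, ht, hmem⟩ := exists_smul_neg_add_mem_ball hb hs₀ hs₁ (hW w hw) hwx
    exact ⟨w, hw, t, ht, ball_subset hmem⟩
  · rw [AffineMap.lineMap_apply_one] at hp ⊢
    have norm_b : ‖b‖ = 1 := hb.antisymm <| not_lt.1 fun h ↦
      hp.2 (ball_subset (mem_ball_zero_iff.2 h))
    obtain ⟨w, hw, hwb⟩ := hsphere b (norm_ne_zero_iff.1 (by simp [norm_b]))
    refine ⟨w, hw, inner ℝ w b, hwb, ball_subset ?_⟩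
    rw [mem_ball_zero_iff, smul_neg, ← sub_eq_add_neg]
    exact norm_sub_inner_smul_lt_one (hW w hw) ((tangentLength_lt_iff_of_norm_eq_one norm_b).2 hwb)

theorem illumNum_biUnion_spike_le {ι : Type*} {S : Finset ι}
    {x : ι → EuclideanSpace ℝ (Fin 3)} {W : Finset (EuclideanSpace ℝ (Fin 3))}
    (hW : ∀ w ∈ W, ‖w‖ = 1)
    (hvertex : ∀ i ∈ S, ∃ w ∈ W, tangentLength (x i) < inner ℝ w (x i))
    (hsphere : ∀ u : EuclideanSpace ℝ (Fin 3), u ≠ 0 → ∃ w ∈ W, 0 < inner ℝ w u) :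
    illumNum (⋃ i ∈ S, spike (x i)) ≤ W.card := by
  classical
  refine Nat.sInf_le ⟨W.image Neg.neg, Finset.card_image_of_injective W neg_injective, ?_, ?_⟩
  · simpa using hW
  · intro p hp
    obtain ⟨w, hw, hwp⟩ := exists_illuminating_of_mem_frontier hW hvertex hsphere hp
    exact ⟨-w, Finset.mem_image_of_mem _ hw, hwp⟩

end Illumination

section Cylindrical

open MeasureTheory

variable {E : Type*} [NormedAddCommGroup E] [InnerProductSpace ℝ E]
  (b : OrthonormalBasis (Fin 3) ℝ E)

/-- The part of `u` orthogonal to the axis `b 0`, as a complex number. Together with the height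
`b.repr u 0` it provides cylindrical coordinates. -/
def transverse (u : E) : ℂ :=
  ⟨b.repr u 1, b.repr u 2⟩

lemma norm_sq_eq_add_sq_norm_transverse (u : E) :
    ‖u‖ ^ 2 = b.repr u 0 ^ 2 + ‖transverse b u‖ ^ 2 := by
  rw [← b.repr.norm_map, EuclideanSpace.norm_sq_eq, Fin.sum_univ_three, Complex.sq_norm,
    Complex.normSq_apply]
  simp only [transverse, Real.norm_eq_abs, sq_abs]
  ring

lemma measurePreserving_repr_transverse [FiniteDimensional ℝ E] [MeasurableSpace E]
    [BorelSpace E] : MeasurePreserving fun u ↦ (b.repr u 0, transverse b u) := by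
  have to_pi := ((volume_preserving_piFinSuccAbove (fun _ : Fin 3 ↦ ℝ) 0).comp
    (PiLp.volume_preserving_ofLp (Fin 3))).comp b.measurePreserving_repr
  have to_complex := Complex.volume_preserving_equiv_pi.symm Complex.measurableEquivPi
  have eq_comp : (fun u ↦ (b.repr u 0, transverse b u)) =
      Prod.map id Complex.measurableEquivPi.symm ∘
        (MeasurableEquiv.piFinSuccAbove (fun _ ↦ ℝ) 0 ∘ WithLp.ofLp) ∘ b.repr := by
    funext u
    refine Prod.ext rfl (Complex.ext ?_ ?_) <;> simp [transverse, Fin.tail]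
  rw [eq_comp]
  exact ((MeasurePreserving.id volume).prod to_complex).comp to_pi

lemma exists_orthonormalBasis_apply_eq {ι F : Type*} [NormedAddCommGroup F]
    [InnerProductSpace ℝ F] [FiniteDimensional ℝ F] [Fintype ι]
    (hcard : Module.finrank ℝ F = Fintype.card ι) (i : ι) {c : F} (hc : ‖c‖ = 1) :
    ∃ b : OrthonormalBasis ι ℝ F, b i = c := by
  have orthonormal_const : Orthonormal ℝ (({i} : Set ι).domRestrict fun _ ↦ c) :=
    ⟨fun _ ↦ hc, fun j k hjk ↦ (hjk (Subsingleton.elim j k)).elim⟩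
  obtain ⟨b, hb⟩ := orthonormal_const.exists_orthonormalBasis_extension_of_card_eq hcard
  exact ⟨b, hb i rfl⟩

end Cylindrical

section Sectors

open MeasureTheory

variable {E : Type*} [NormedAddCommGroup E] [InnerProductSpace ℝ E] {y z : E}

/-- The part of the open unit ball lying over the spherical cap visible from `y`. -/
def sector (y : E) : Set E :=
  {u | ‖u‖ < 1 ∧ ‖u‖ < inner ℝ u y}

lemma isOpen_sector : IsOpen (sector y) :=
  (isOpen_lt (by fun_prop) (by fun_prop)).and (isOpen_lt (by fun_prop) (by fun_prop))

lemma sector_subset_ball : sector y ⊆ ball 0 1 := fun _ hu ↦ mem_ball_zero_iff.2 hu.1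

lemma disjoint_sector (h : (openSegment ℝ y z ∩ closedBall 0 1).Nonempty) :
    Disjoint (sector y) (sector z) := by
  obtain ⟨_, ⟨s, t, hs, ht, hst, rfl⟩, hmem⟩ := h
  refine disjoint_left.2 fun u ⟨_, huy⟩ ⟨_, huz⟩ ↦ ?_
  have lower : ‖u‖ < inner ℝ u (s • y + t • z) := by
    rw [inner_add_right, inner_smul_right, inner_smul_right]
    calc ‖u‖ = s * ‖u‖ + t * ‖u‖ := by rw [← add_mul, hst, one_mul]
      _ < _ := by gcongr
  have upper : inner ℝ u (s • y + t • z) ≤ ‖u‖ :=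
    (real_inner_le_norm _ _).trans
      (mul_le_of_le_one_right (norm_nonneg _) (mem_closedBall_zero_iff.1 hmem))
  exact lower.not_ge upper

lemma volume_setOf_sq_norm_lt (c : ℝ) :
    volume {ζ : ℂ | ‖ζ‖ ^ 2 < c} = ENNReal.ofReal (π * c) := by
  rcases le_or_gt c 0 with hc | hc
  · rw [ENNReal.ofReal_of_nonpos (mul_nonpos_of_nonneg_of_nonpos pi_pos.le hc)]
    convert measure_empty (μ := (volume : Measure ℂ))
    exact eq_empty_of_forall_notMem fun ζ hζ ↦ (hc.trans (sq_nonneg ‖ζ‖)).not_gt hζ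
  · have eq_ball : {ζ : ℂ | ‖ζ‖ ^ 2 < c} = ball 0 √c := by
      ext ζ
      rw [mem_ball_zero_iff, lt_sqrt (norm_nonneg ζ)]
      rfl
    rw [eq_ball, Complex.volume_ball, ← ENNReal.ofReal_pow (sqrt_nonneg c), sq_sqrt hc.le,
      mul_comm, ENNReal.ofReal_mul pi_pos.le, ← NNReal.coe_real_pi, ENNReal.ofReal_coe_nnreal]

lemma mem_sector_iff (hy : y ≠ 0) {b : OrthonormalBasis (Fin 3) ℝ E} (hb : b 0 = ‖y‖⁻¹ • y)
    {u : E} : u ∈ sector y ↔ 0 < b.repr u 0 ∧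
      ‖transverse b u‖ ^ 2 < min (1 - b.repr u 0 ^ 2) ((‖y‖ ^ 2 - 1) * b.repr u 0 ^ 2) := by
  have norm_pos : 0 < ‖y‖ := norm_pos_iff.2 hy
  have inner_eq : inner ℝ u y = ‖y‖ * b.repr u 0 := by
    rw [b.repr_apply_apply, hb, real_inner_smul_left, mul_inv_cancel_left₀ norm_pos.ne',
      real_inner_comm]
  have norm_sq := norm_sq_eq_add_sq_norm_transverse b u
  rw [sector, mem_ofPred_eq, inner_eq, ← sq_lt_one_iff₀ (norm_nonneg u), lt_min_iff]
  constructor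
  · rintro ⟨lt_one, lt_inner⟩
    refine ⟨pos_of_mul_pos_right ((norm_nonneg u).trans_lt lt_inner) norm_pos.le, by linarith, ?_⟩
    nlinarith [pow_lt_pow_left₀ lt_inner (norm_nonneg u) two_ne_zero]
  · rintro ⟨pos, lt_one, lt_inner⟩
    exact ⟨by linarith, lt_of_pow_lt_pow_left₀ 2 (by positivity) (by nlinarith)⟩

lemma integral_min_one_sub_sq {a : ℝ} (ha : 1 < a) :
    ∫ z in (0 : ℝ)..1, min (1 - z ^ 2) ((a ^ 2 - 1) * z ^ 2) = 2 / 3 * (1 - a⁻¹) := by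
  have a_pos : 0 < a := by linarith
  have inv_le_one : a⁻¹ ≤ 1 := inv_le_one_of_one_le₀ ha.le
  have integrable (s t : ℝ) : IntervalIntegrable
      (fun z : ℝ ↦ min (1 - z ^ 2) ((a ^ 2 - 1) * z ^ 2)) volume s t :=
    Continuous.intervalIntegrable (by fun_prop) s t
  have below : ∫ z in (0 : ℝ)..a⁻¹, min (1 - z ^ 2) ((a ^ 2 - 1) * z ^ 2) =
      ∫ z in (0 : ℝ)..a⁻¹, (a ^ 2 - 1) * z ^ 2 := by
    refine intervalIntegral.integral_congr fun z hz ↦ min_eq_right ?_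
    rw [uIcc_of_le (by positivity)] at hz
    have : (a * z) ^ 2 ≤ 1 :=
      pow_le_one₀ (mul_nonneg a_pos.le hz.1) ((le_inv_mul_iff₀ a_pos).1 (by simpa using hz.2))
    linarith [mul_pow a z 2]
  have above : ∫ z in a⁻¹..1, min (1 - z ^ 2) ((a ^ 2 - 1) * z ^ 2) =
      ∫ z in a⁻¹..1, (1 - z ^ 2) := by
    refine intervalIntegral.integral_congr fun z hz ↦ min_eq_left ?_
    rw [uIcc_of_le inv_le_one] at hz
    have : 1 ≤ (a * z) ^ 2 := one_le_pow₀ ((inv_le_iff_one_le_mul₀' a_pos).1 hz.1)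
    linarith [mul_pow a z 2]
  rw [← intervalIntegral.integral_add_adjacent_intervals (integrable 0 a⁻¹) (integrable a⁻¹ 1),
    below, above, intervalIntegral.integral_sub (by simp) (by simp)]
  simp only [intervalIntegral.integral_const_mul, integral_pow, intervalIntegral.integral_const]
  norm_num
  field_simp
  ring

lemma volume_setOf_sq_norm_lt_min {a : ℝ} (ha : 1 < a) :
    volume {r : ℝ × ℂ | 0 < r.1 ∧ ‖r.2‖ ^ 2 < min (1 - r.1 ^ 2) ((a ^ 2 - 1) * r.1 ^ 2)} =
      ENNReal.ofReal (2 / 3 * π * (1 - a⁻¹)) := by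
  let bound (z : ℝ) : ℝ := min (1 - z ^ 2) ((a ^ 2 - 1) * z ^ 2)
  let solid : Set (ℝ × ℂ) := {r | 0 < r.1 ∧ ‖r.2‖ ^ 2 < bound r.1}
  have measurable_solid : MeasurableSet solid :=
    ((isOpen_lt (by fun_prop) (by fun_prop)).and
      (isOpen_lt (by fun_prop) (by fun_prop))).measurableSet
  have volume_slice (z : ℝ) : volume (Prod.mk z ⁻¹' solid) =
      (Ioc 0 1).indicator (fun z ↦ ENNReal.ofReal (π * bound z)) z := by
    by_cases hz : 0 < z
    · have : volume (Prod.mk z ⁻¹' solid) = ENNReal.ofReal (π * bound z) := by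
        rw [← volume_setOf_sq_norm_lt]
        simp [solid, hz]
      rw [this, indicator_apply]
      split_ifs with hz₁
      · rfl
      · have one_lt : 1 < z := not_le.1 fun h ↦ hz₁ ⟨hz, h⟩
        exact ENNReal.ofReal_of_nonpos (mul_nonpos_of_nonneg_of_nonpos pi_pos.le
          (min_le_of_left_le (by nlinarith)))
    · simp [solid, hz]
  have bound_nonneg : ∀ z ∈ Ioc (0 : ℝ) 1, 0 ≤ π * bound z := fun z hz ↦
    mul_nonneg pi_pos.le <| le_min (by nlinarith [hz.1, hz.2]) <|
      mul_nonneg (by nlinarith) (sq_nonneg z)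
  change volume solid = _
  rw [Measure.volume_eq_prod, Measure.prod_apply measurable_solid,
    lintegral_congr volume_slice, lintegral_indicator measurableSet_Ioc,
    ← ofReal_integral_eq_lintegral_ofReal (Continuous.integrableOn_Ioc (by fun_prop))
      ((ae_restrict_iff' measurableSet_Ioc).2 (.of_forall bound_nonneg)),
    ← intervalIntegral.integral_of_le zero_le_one, intervalIntegral.integral_const_mul,
    integral_min_one_sub_sq ha]
  ring_nf

variable [FiniteDimensional ℝ E] [MeasurableSpace E] [BorelSpace E]

lemma volume_sector (hE : Module.finrank ℝ E = 3) (hy : 1 < ‖y‖) :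
    volume (sector y) = ENNReal.ofReal (2 / 3 * π * (1 - ‖y‖⁻¹)) := by
  have y_ne_zero : y ≠ 0 := norm_pos_iff.1 (by linarith)
  obtain ⟨b, hb⟩ := exists_orthonormalBasis_apply_eq (ι := Fin 3) (by simpa using hE) 0
    (norm_smul_inv_norm (𝕜 := ℝ) y_ne_zero)
  have measurable_solid : MeasurableSet {r : ℝ × ℂ |
      0 < r.1 ∧ ‖r.2‖ ^ 2 < min (1 - r.1 ^ 2) ((‖y‖ ^ 2 - 1) * r.1 ^ 2)} :=
    ((isOpen_lt (by fun_prop) (by fun_prop)).and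
      (isOpen_lt (by fun_prop) (by fun_prop))).measurableSet
  rw [← volume_setOf_sq_norm_lt_min hy, ← (measurePreserving_repr_transverse b).measure_preimage
    measurable_solid.nullMeasurableSet]
  congr 1
  ext u
  exact mem_sector_iff y_ne_zero hb

lemma volume_ball_of_finrank_eq_three (hE : Module.finrank ℝ E = 3) :
    volume (ball (0 : E) 1) = ENNReal.ofReal (2 / 3 * π * 2) := by
  rw [InnerProductSpace.volume_ball_of_dim_odd (k := 1) (by simpa using hE), hE]
  norm_num [Nat.doubleFactorial]
  ring_nf

theorem sum_one_sub_inv_norm_le_two {ι : Type*} {S : Finset ι} {x : ι → E}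
    (hE : Module.finrank ℝ E = 3) (hx : ∀ i ∈ S, 1 < ‖x i‖)
    (hpair : (S : Set ι).Pairwise fun i j ↦
      (openSegment ℝ (x i) (x j) ∩ closedBall 0 1).Nonempty) :
    ∑ i ∈ S, (1 - ‖x i‖⁻¹) ≤ 2 := by
  have inv_le_one : ∀ i ∈ S, 0 ≤ 1 - ‖x i‖⁻¹ := fun i hi ↦
    sub_nonneg.2 (inv_le_one_of_one_le₀ (hx i hi).le)
  have sum_volume_le : ∑ i ∈ S, volume (sector (x i)) ≤ volume (ball (0 : E) 1) := by
    rw [← measure_biUnion_finset (fun i hi j hj hij ↦ disjoint_sector (hpair hi hj hij))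
      fun i _ ↦ isOpen_sector.measurableSet]
    exact measure_mono (iUnion₂_subset fun i _ ↦ sector_subset_ball)
  rw [Finset.sum_congr rfl fun i hi ↦ volume_sector hE (hx i hi),
    volume_ball_of_finrank_eq_three hE,
    ← ENNReal.ofReal_sum_of_nonneg fun i hi ↦ mul_nonneg (by positivity) (inv_le_one i hi),
    ← Finset.mul_sum, ENNReal.ofReal_le_ofReal_iff (by positivity)] at sum_volume_le
  exact le_of_mul_le_mul_left sum_volume_le (by positivity)

end Sectors

section Azimuth

open MeasureTheory

lemma exists_forall_dist_le_of_sum_lt_one {ι : Type*} {T : ℝ} [Fact (0 < T)] {S : Finset ι}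
    {φ : ι → AddCircle T} {B : ι → ℝ} (hB : ∀ i ∈ S, 0 ≤ B i) (hsum : ∑ i ∈ S, B i < 1) :
    ∃ β : AddCircle T, ∀ i ∈ S, dist β (φ i) ≤ T / 2 * (1 - B i) := by
  have T_pos : 0 < T := Fact.out
  have volume_compl : ∀ i ∈ S,
      volume (closedBall (φ i) (T / 2 * (1 - B i)))ᶜ = ENNReal.ofReal (T * B i) := fun i hi ↦ by
    have B_le_one : B i ≤ 1 := (Finset.single_le_sum hB hi).trans hsum.le
    rw [measure_compl measurableSet_closedBall (measure_ne_top _ _), AddCircle.volume_closedBall,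
      AddCircle.measure_univ, min_eq_right (by nlinarith [hB i hi]),
      ← ENNReal.ofReal_sub _ (by nlinarith)]
    ring_nf
  have volume_lt : volume (⋃ i ∈ S, (closedBall (φ i) (T / 2 * (1 - B i)))ᶜ) <
      volume (univ : Set (AddCircle T)) := by
    refine (measure_biUnion_finset_le S _).trans_lt ?_
    rw [Finset.sum_congr rfl volume_compl, AddCircle.measure_univ,
      ← ENNReal.ofReal_sum_of_nonneg fun i hi ↦ mul_nonneg T_pos.le (hB i hi), ← Finset.mul_sum]
    exact (ENNReal.ofReal_lt_ofReal_iff T_pos).2 (mul_lt_of_lt_one_right T_pos hsum)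
  obtain ⟨β, hβ⟩ := (ne_univ_iff_exists_notMem _).1 fun h ↦ volume_lt.ne (congrArg volume h)
  simp only [mem_iUnion, mem_compl_iff, not_exists, not_not] at hβ
  exact ⟨β, hβ⟩

lemma exists_int_abs_sub_le_of_dist_le {T δ β φ : ℝ} (h : dist (β : AddCircle T) φ ≤ δ) :
    ∃ k : ℤ, |β + k * T - φ| ≤ δ := by
  rw [dist_eq_norm, ← AddCircle.coe_sub, AddCircle.norm_eq] at h
  refine ⟨-round (T⁻¹ * (β - φ)), ?_⟩
  convert h using 2
  push_cast
  ring

lemma sum_erase_sub_one_div_add_one_le_one {ι : Type*} [DecidableEq ι] {S : Finset ι}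
    {N : ι → ℝ} (hN : ∀ j ∈ S, 1 ≤ N j) (hsum : ∑ j ∈ S, (1 - (N j)⁻¹) ≤ 2) {i : ι} (hi : i ∈ S)
    (hmax : ∀ j ∈ S, N j ≤ N i) :
    ∑ j ∈ S.erase i, (N j - 1) / (N j + 1) ≤ 1 := by
  have N_pos : ∀ j ∈ S, 0 < N j := fun j hj ↦ by linarith [hN j hj]
  have inv_pos : 0 < (N i)⁻¹ := inv_pos.2 (N_pos i hi)
  have term_le : ∀ j ∈ S.erase i,
      (N j - 1) / (N j + 1) ≤ (1 - (N j)⁻¹) / (1 + (N i)⁻¹) := fun j hj ↦ by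
    have hj := Finset.mem_of_mem_erase hj
    have N_inv_le_one : (N j)⁻¹ ≤ 1 := inv_le_one_of_one_le₀ (hN j hj)
    have inv_le_inv : (N i)⁻¹ ≤ (N j)⁻¹ := inv_anti₀ (N_pos j hj) (hmax j hj)
    calc (N j - 1) / (N j + 1) = (1 - (N j)⁻¹) / (1 + (N j)⁻¹) := by
          have := N_pos j hj
          field_simp
      _ ≤ _ := by gcongr
  calc ∑ j ∈ S.erase i, (N j - 1) / (N j + 1)
      ≤ (∑ j ∈ S.erase i, (1 - (N j)⁻¹)) / (1 + (N i)⁻¹) := by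
        rw [Finset.sum_div]
        exact Finset.sum_le_sum term_le
    _ ≤ 1 := by
        rw [div_le_one (by linarith), Finset.sum_erase_eq_sub hi]
        linarith

end Azimuth

section Inequalities

lemma lt_mul_add_mul_of_mem_arc {a b c R z z₁ z₂ ρ ρ₁ ρ₂ : ℝ} (ha : 0 ≤ a) (hρ : 0 ≤ ρ)
    (hR : z ^ 2 + ρ ^ 2 = R) (hR₁ : z₁ ^ 2 + ρ₁ ^ 2 = R) (hR₂ : z₂ ^ 2 + ρ₂ ^ 2 = R)
    (hz₁ : z₁ ≤ z) (hz₂ : z ≤ z₂) (h₁ : c < a * ρ₁ + b * z₁) (h₂ : c < a * ρ₂ + b * z₂) :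
    c < a * ρ + b * z := by
  obtain ⟨s, t, hs, ht, hst, rfl⟩ : z ∈ segment ℝ z₁ z₂ :=
    segment_eq_Icc (hz₁.trans hz₂) ▸ ⟨hz₁, hz₂⟩
  simp only [smul_eq_mul] at hR ⊢
  have chord_le_arc : s * ρ₁ + t * ρ₂ ≤ ρ := by
    refine le_of_sq_le_sq ?_ hρ
    have : 0 ≤ s * t * ((z₁ - z₂) ^ 2 + (ρ₁ - ρ₂) ^ 2) := by positivity
    obtain rfl : t = 1 - s := by linarith
    linear_combination this + (1 - s) * hR₂ + s * hR₁ - hR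
  calc c = s * c + t * c := by rw [← add_mul, hst, one_mul]
    _ < s * (a * ρ₁ + b * z₁) + t * (a * ρ₂ + b * z₂) := by
        rcases hs.eq_or_lt with rfl | hs
        · obtain rfl : t = 1 := by linarith
          linarith
        · nlinarith
    _ = a * (s * ρ₁ + t * ρ₂) + b * (s * z₁ + t * z₂) := by ring
    _ ≤ _ := by gcongr

lemma one_sub_mul_sq_le_cos (t : ℝ) : 1 - 31 / 100 * t ^ 2 ≤ cos (π / 4 * t) := by
  have pi_sq_le : π ^ 2 ≤ 992 / 100 := by nlinarith [pi_gt_three, pi_lt_d4]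
  calc 1 - 31 / 100 * t ^ 2 ≤ 1 - (π / 4 * t) ^ 2 / 2 := by nlinarith [sq_nonneg t]
    _ ≤ _ := one_sub_sq_div_two_le_cos

variable {p q C : ℝ}

lemma sub_mul_le_cos_of_param (hq : 0 ≤ q) :
    97 / 100 - 47 / 100 * q ≤ cos (π / 4 * (1 - 24 / 25 * ((1 - q) / (1 + q)) ^ 2)) := by
  have clear_denom : 1 - 24 / 25 * ((1 - q) / (1 + q)) ^ 2 =
      (1 / 25 + 98 / 25 * q + 1 / 25 * q ^ 2) / (1 + q) ^ 2 := by
    field_simp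
    ring
  have poly : 31 / 100 * (1 / 25 + 98 / 25 * q + 1 / 25 * q ^ 2) ^ 2 ≤
      (3 / 100 + 47 / 100 * q) * ((1 + q) ^ 2) ^ 2 := by
    nlinarith [sq_nonneg (q - 37 / 100), mul_nonneg hq (sq_nonneg (q - 37 / 100)),
      pow_nonneg hq 4, pow_nonneg hq 5]
  refine le_trans ?_ (one_sub_mul_sq_le_cos _)
  rw [clear_denom, div_pow, ← mul_div_assoc]
  linarith [(div_le_iff₀ (by positivity)).2 poly]

lemma endpoint_touching_pole (hp : 0 < p) (hpq : p ≤ q) (hq : q < 1)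
    (hC : 97 / 100 - 47 / 100 * q ≤ C) :
    17 / 10 * p * (1 - q ^ 2) < 2 * q * C := by
  have quad : 85 / 100 * (1 - q ^ 2) < C := by nlinarith [sq_nonneg (q - 47 / 170)]
  calc 17 / 10 * p * (1 - q ^ 2) ≤ 17 / 10 * q * (1 - q ^ 2) := by gcongr; nlinarith
    _ = 2 * q * (85 / 100 * (1 - q ^ 2)) := by ring
    _ < 2 * q * C := by gcongr; linarith

lemma endpoint_touching_cap_diagonal (hq₀ : 0 < q) (hq : q < 1) (hC₀ : 69 / 100 ≤ C)
    (hC : 97 / 100 - 47 / 100 * q ≤ C) :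
    0 < 17 / 5 * C * (33 / 16 - q / 2 - q ^ 2) +
      289 / 100 * q + 389 / 100 * q ^ 2 - 5001 / 800 := by
  have factor_pos : 0 < 33 / 16 - q / 2 - q ^ 2 := by nlinarith
  rcases le_total q (3 / 5) with _ | hq'
  · nlinarith [mul_le_mul_of_nonneg_right hC factor_pos.le,
      mul_nonneg hq₀.le (sq_nonneg (q - 43 / 100)), sq_nonneg (q - 43 / 100)]
  · nlinarith [mul_le_mul_of_nonneg_right hC₀ factor_pos.le]

/-- Replacing `p ^ 2` by its tangent at `1 / 4` leaves an inequality affine in `p`, which only has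
to be checked at `p = 0` and `p = q`. -/
lemma endpoint_touching_cap (hp : 0 < p) (hpq : p ≤ q) (hq : q < 1) (hC₀ : 69 / 100 ≤ C)
    (hC₁ : C ≤ 1) (hC : 97 / 100 - 47 / 100 * q ≤ C) :
    389 / 100 * p * (1 - q ^ 2) + 2 * q * (1 - 289 / 100 * p ^ 2) <
      17 / 5 * (p + q) * (1 - p * q) * C := by
  have hq₀ : 0 < q := hp.trans_le hpq
  have diagonal := endpoint_touching_cap_diagonal hq₀ hq hC₀ hC
  have lower : 0 < (q - p) * (289 / 80 * C - 1889 / 800) + p *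
      (17 / 5 * C * (33 / 16 - q / 2 - q ^ 2) + 289 / 100 * q + 389 / 100 * q ^ 2 - 5001 / 800) :=
    add_pos_of_nonneg_of_pos (mul_nonneg (by linarith) (by linarith)) (mul_pos hp diagonal)
  have : 0 ≤ q * (578 / 100 - 17 / 5 * C) * (p - 1 / 4) ^ 2 :=
    mul_nonneg (mul_nonneg hq₀.le (by linarith)) (sq_nonneg _)
  linarith

/-- The right-hand side is concave along the arc of positions allowed by `hz₀` and `hz₁`, so it
suffices to consider its ends, where the cap of parameter `q` touches the cap of parameter `p` and
where it touches the pole. The factor `17 / 10` is a numerical choice that works at both ends. -/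
lemma tangentLength_lt_of_params {z ρ : ℝ} (hp : 0 < p) (hpq : p ≤ q) (hq : q < 1)
    (hC₀ : 69 / 100 ≤ C) (hC₁ : C ≤ 1) (hC : 97 / 100 - 47 / 100 * q ≤ C) (hρ : 0 ≤ ρ)
    (hcircle : z ^ 2 + ρ ^ 2 = ((1 + q ^ 2) / (2 * q)) ^ 2)
    (hz₀ : ((1 - p ^ 2) / (2 * p) * ((1 - q ^ 2) / (2 * q)) - 1) / ((1 + p ^ 2) / (2 * p)) ≤ z)
    (hz₁ : z ≤ (1 - q ^ 2) / (2 * q)) :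
    (1 - q ^ 2) / (2 * q) * (1 + (17 / 10 * p) ^ 2) <
      2 * (17 / 10 * p) * C * ρ + (1 - (17 / 10 * p) ^ 2) * z := by
  have hq₀ : 0 < q := hp.trans_le hpq
  refine lt_mul_add_mul_of_mem_arc (ρ₁ := ((1 - p ^ 2) / (2 * p) + (1 - q ^ 2) / (2 * q)) /
    ((1 + p ^ 2) / (2 * p))) (ρ₂ := 1) (by positivity) hρ hcircle ?_ ?_ hz₀ hz₁ ?_ ?_
  · field_simp
    ring
  · field_simp
    ring
  · have := endpoint_touching_cap hp hpq hq hC₀ hC₁ hC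
    rw [← sub_pos] at this ⊢
    refine (mul_pos (div_pos hp (show 0 < q * (1 + p ^ 2) by positivity)) this).trans_eq ?_
    field_simp
    ring
  · have := endpoint_touching_pole hp hpq hq hC
    rw [← sub_pos] at this ⊢
    refine (mul_pos (show 0 < 17 / 10 * p / q by positivity) this).trans_eq ?_
    field_simp
    ring

end Inequalities

section CapParam

variable {E : Type*} [NormedAddCommGroup E] {y z : E}

/-- If the cap visible from `y` has angular radius `α`, that is `cos α = 1 / ‖y‖`, then
`capParam y = tan (π / 4 - α / 2)`. Norm and tangent length of `y` are rational functions of it. -/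
def capParam (y : E) : ℝ :=
  ‖y‖ - tangentLength y

lemma capParam_eq_inv (hy : 1 ≤ ‖y‖) : capParam y = (‖y‖ + tangentLength y)⁻¹ := by
  refine eq_inv_of_mul_eq_one_left ?_
  rw [capParam]
  linear_combination -sq_tangentLength hy

lemma capParam_pos (hy : 1 ≤ ‖y‖) : 0 < capParam y :=
  sub_pos.2 (tangentLength_lt_norm hy)

lemma capParam_lt_one (hy : 1 < ‖y‖) : capParam y < 1 := by
  rw [capParam_eq_inv hy.le]
  exact inv_lt_one_of_one_lt₀ (by linarith [tangentLength_nonneg (y := y)])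

lemma capParam_le_capParam (hy : 1 ≤ ‖y‖) (hyz : ‖y‖ ≤ ‖z‖) : capParam z ≤ capParam y := by
  have tangentLength_le : tangentLength y ≤ tangentLength z := by
    unfold tangentLength
    gcongr
  rw [capParam_eq_inv hy, capParam_eq_inv (hy.trans hyz)]
  exact inv_anti₀ (by linarith [tangentLength_nonneg (y := y)]) (add_le_add hyz tangentLength_le)

lemma norm_eq_capParam (hy : 1 ≤ ‖y‖) : ‖y‖ = (1 + capParam y ^ 2) / (2 * capParam y) := by
  have := capParam_pos hy
  rw [eq_div_iff (by positivity), capParam]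
  linear_combination -sq_tangentLength hy

lemma tangentLength_eq_capParam (hy : 1 ≤ ‖y‖) :
    tangentLength y = (1 - capParam y ^ 2) / (2 * capParam y) := by
  have := capParam_pos hy
  rw [eq_div_iff (by positivity), capParam]
  linear_combination -sq_tangentLength hy

/-- A bound for the fraction of all azimuths modulo `π / 2` that are useless for the vertex `y` in
the choice of four oblique directions. The factor `24 / 25` makes the costs of all vertices but the
farthest one add up to less than `1`. -/
def azimuthCost (y : E) : ℝ :=
  24 / 25 * ((‖y‖ - 1) / (‖y‖ + 1))

lemma azimuthCost_eq_capParam (hy : 1 ≤ ‖y‖) :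
    azimuthCost y = 24 / 25 * ((1 - capParam y) / (1 + capParam y)) ^ 2 := by
  have := capParam_pos hy
  rw [azimuthCost, norm_eq_capParam hy]
  field_simp
  ring

lemma azimuthCost_nonneg (hy : 1 ≤ ‖y‖) : 0 ≤ azimuthCost y := by
  rw [azimuthCost_eq_capParam hy]
  positivity

lemma azimuthCost_le_one : azimuthCost y ≤ 1 := by
  have : (‖y‖ - 1) / (‖y‖ + 1) ≤ 1 := (div_le_one (by positivity)).2 (by linarith)
  rw [azimuthCost]
  linarith

lemma sum_erase_azimuthCost_lt_one {ι : Type*} [DecidableEq ι] {S : Finset ι} {x : ι → E}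
    (hx : ∀ j ∈ S, 1 ≤ ‖x j‖) (hsum : ∑ j ∈ S, (1 - ‖x j‖⁻¹) ≤ 2) {i : ι} (hi : i ∈ S)
    (hmax : ∀ j ∈ S, ‖x j‖ ≤ ‖x i‖) : ∑ j ∈ S.erase i, azimuthCost (x j) < 1 := by
  simp only [azimuthCost]
  rw [← Finset.mul_sum]
  linarith [sum_erase_sub_one_div_add_one_le_one hx hsum hi hmax]

lemma const_le_cos_azimuthCost (hy : 1 ≤ ‖y‖) :
    69 / 100 ≤ cos (π / 4 * (1 - azimuthCost y)) := by
  nlinarith [one_sub_mul_sq_le_cos (1 - azimuthCost y), azimuthCost_nonneg hy,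
    azimuthCost_le_one (y := y)]

lemma sub_mul_capParam_le_cos_azimuthCost (hy : 1 ≤ ‖y‖) :
    97 / 100 - 47 / 100 * capParam y ≤ cos (π / 4 * (1 - azimuthCost y)) := by
  rw [azimuthCost_eq_capParam hy]
  exact sub_mul_le_cos_of_param (capParam_pos hy).le

end CapParam

section Directions

variable {E : Type*} [NormedAddCommGroup E] [InnerProductSpace ℝ E]
  (b : OrthonormalBasis (Fin 3) ℝ E) {τ : ℝ}

/-- The unit vector at angle `2 arctan τ` from `b 0` with azimuth `θ`. -/
def oblique (τ θ : ℝ) : E :=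
  b.repr.symm !₂[(1 - τ ^ 2) / (1 + τ ^ 2), 2 * τ / (1 + τ ^ 2) * cos θ,
    2 * τ / (1 + τ ^ 2) * sin θ]

lemma norm_oblique (τ θ : ℝ) : ‖oblique b τ θ‖ = 1 := by
  rw [oblique, LinearIsometryEquiv.norm_map, EuclideanSpace.norm_eq, Real.sqrt_eq_one,
    Fin.sum_univ_three]
  simp only [Real.norm_eq_abs, sq_abs, Matrix.cons_val]
  field_simp
  linear_combination 4 * τ ^ 2 * sin_sq_add_cos_sq θ

lemma inner_oblique (τ θ : ℝ) (u : E) :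
    inner ℝ (oblique b τ θ) u = ((1 - τ ^ 2) * b.repr u 0 +
      2 * τ * ‖transverse b u‖ * cos (θ - (transverse b u).arg)) / (1 + τ ^ 2) := by
  rw [← b.repr.inner_map_map, oblique, LinearIsometryEquiv.apply_symm_apply, cos_sub]
  have re_eq : ‖transverse b u‖ * cos (transverse b u).arg = b.repr u 1 :=
    Complex.norm_mul_cos_arg _
  have im_eq : ‖transverse b u‖ * sin (transverse b u).arg = b.repr u 2 :=
    Complex.norm_mul_sin_arg _
  simp only [PiLp.inner_apply, Fin.sum_univ_three, Real.inner_apply, Matrix.cons_val, ← re_eq,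
    ← im_eq]
  ring

open Classical in
/-- The two directions of the axis `b 0` and four directions at equal angle from it, with azimuths
a quarter turn apart. -/
def sixDirections (τ β : ℝ) : Finset E :=
  {b 0, -b 0} ∪ (Finset.range 4).image fun n : ℕ ↦ oblique b τ (β + n * (π / 2))

variable {b} {β : ℝ} {u : E}

lemma card_sixDirections_le : (sixDirections b τ β).card ≤ 6 := by
  classical
  exact (Finset.card_union_le _ _).trans (add_le_add Finset.card_le_two Finset.card_image_le)

lemma norm_eq_one_of_mem_sixDirections {w : E} (hw : w ∈ sixDirections b τ β) : ‖w‖ = 1 := by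
  simp only [sixDirections, Finset.mem_union, Finset.mem_insert, Finset.mem_singleton,
    Finset.mem_image] at hw
  obtain (rfl | rfl) | ⟨n, _, rfl⟩ := hw
  · exact b.norm_eq_one 0
  · rw [norm_neg, b.norm_eq_one 0]
  · exact norm_oblique b τ _

lemma axis_mem_sixDirections : b 0 ∈ sixDirections b τ β := by
  simp [sixDirections]

lemma neg_axis_mem_sixDirections : -b 0 ∈ sixDirections b τ β := by
  simp [sixDirections]

lemma oblique_mem_sixDirections (k : ℤ) : oblique b τ (β + k * (π / 2)) ∈ sixDirections b τ β := by
  have four_pos : (0 : ℤ) < 4 := by norm_num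
  obtain ⟨n, hn⟩ := Int.eq_ofNat_of_zero_le (k.emod_nonneg four_pos.ne')
  have angle_eq : β + k * (π / 2) = β + n * (π / 2) + (k / 4 : ℤ) * (2 * π) := by
    have : (k : ℝ) = 4 * (k / 4 : ℤ) + n := by exact_mod_cast hn ▸ (k.mul_ediv_add_emod 4).symm
    rw [this]
    ring
  classical
  refine Finset.mem_union_right _ (Finset.mem_image.2 ⟨n, ?_, ?_⟩)
  · have := k.emod_lt_of_pos four_pos
    grind
  · rw [angle_eq, oblique, oblique, cos_add_int_mul_two_pi, sin_add_int_mul_two_pi]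

lemma exists_mem_sixDirections_le_inner {δ : ℝ} (hτ : 0 ≤ τ) (hδ : δ ≤ π)
    (hdist : dist (β : AddCircle (π / 2)) (transverse b u).arg ≤ δ) :
    ∃ w ∈ sixDirections b τ β,
      ((1 - τ ^ 2) * b.repr u 0 + 2 * τ * ‖transverse b u‖ * cos δ) / (1 + τ ^ 2) ≤
        inner ℝ w u := by
  obtain ⟨k, hk⟩ := exists_int_abs_sub_le_of_dist_le hdist
  refine ⟨_, oblique_mem_sixDirections k, ?_⟩
  rw [inner_oblique, ← cos_abs (β + k * (π / 2) - _)]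
  gcongr
  exact cos_le_cos_of_nonneg_of_le_pi (abs_nonneg _) hδ hk

lemma exists_mem_sixDirections_inner_pos (hτ : 0 < τ) (hu : u ≠ 0) :
    ∃ w ∈ sixDirections b τ β, 0 < inner ℝ w u := by
  have inner_axis : inner ℝ (b 0) u = b.repr u 0 := (b.repr_apply_apply u 0).symm
  rcases lt_trichotomy (b.repr u 0) 0 with neg | zero | pos
  · exact ⟨-b 0, neg_axis_mem_sixDirections, by rwa [inner_neg_left, inner_axis, neg_pos]⟩
  · have transverse_pos : 0 < ‖transverse b u‖ := by
      refine (norm_nonneg _).lt_of_ne fun h ↦ hu ?_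
      rw [← norm_eq_zero, ← sq_eq_zero_iff, norm_sq_eq_add_sq_norm_transverse b, ← h, zero]
      norm_num
    have dist_le : dist (β : AddCircle (π / 2)) (transverse b u).arg ≤ π / 4 := by
      rw [dist_eq_norm]
      refine (AddCircle.norm_le_half_period _ (by positivity)).trans_eq ?_
      rw [abs_of_pos (by positivity)]
      ring
    obtain ⟨w, hw, hle⟩ := exists_mem_sixDirections_le_inner hτ.le (by linarith [pi_pos]) dist_le
    refine ⟨w, hw, lt_of_lt_of_le ?_ hle⟩
    rw [zero, mul_zero, zero_add, cos_pi_div_four]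
    positivity
  · exact ⟨b 0, axis_mem_sixDirections, by rwa [inner_axis]⟩

end Directions

section Vertices

variable {E : Type*} [NormedAddCommGroup E] [InnerProductSpace ℝ E]
  {b : OrthonormalBasis (Fin 3) ℝ E} {β : ℝ} {x y z : E}

lemma inner_le_one_sub_tangentLength_mul (hy : 1 ≤ ‖y‖) (hz : 1 ≤ ‖z‖)
    (h : (openSegment ℝ y z ∩ closedBall 0 1).Nonempty) :
    inner ℝ y z ≤ 1 - tangentLength y * tangentLength z := by
  obtain ⟨_, ⟨s, t, hs, ht, hst, rfl⟩, hmem⟩ := h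
  have norm_sq_le : ‖s • y + t • z‖ ^ 2 ≤ 1 :=
    pow_le_one₀ (norm_nonneg _) (mem_closedBall_zero_iff.1 hmem)
  rw [norm_add_sq_real, norm_smul_of_nonneg hs.le, norm_smul_of_nonneg ht.le, real_inner_smul_left,
    real_inner_smul_right, mul_pow, mul_pow] at norm_sq_le
  have sq_expand : s ^ 2 * (‖y‖ ^ 2 - 1) + t ^ 2 * (‖z‖ ^ 2 - 1) -
      2 * (s * t) * (tangentLength y * tangentLength z) =
      (s * tangentLength y - t * tangentLength z) ^ 2 := by
    rw [← sq_tangentLength hy, ← sq_tangentLength hz]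
    ring
  have one_eq : s ^ 2 + 2 * (s * t) + t ^ 2 = 1 := by linear_combination (s + t + 1) * hst
  refine le_of_mul_le_mul_left ?_ (show 0 < 2 * (s * t) by positivity)
  linarith [sq_nonneg (s * tangentLength y - t * tangentLength z)]

lemma le_repr_of_openSegment_inter_nonempty (hb : b 0 = -(‖x‖⁻¹ • x)) (hx : 1 ≤ ‖x‖)
    (hy : 1 ≤ ‖y‖) (hxy : (openSegment ℝ x y ∩ closedBall 0 1).Nonempty) :
    (tangentLength x * tangentLength y - 1) / ‖x‖ ≤ b.repr y 0 := by
  rw [b.repr_apply_apply, hb, inner_neg_left, real_inner_smul_left, div_eq_inv_mul, ← mul_neg]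
  gcongr
  linarith [inner_le_one_sub_tangentLength_mul hx hy hxy]

lemma exists_mem_sixDirections_tangentLength_lt_inner (hb : b 0 = -(‖x‖⁻¹ • x)) (hy : 1 < ‖y‖)
    (hyx : ‖y‖ ≤ ‖x‖) (hxy : (openSegment ℝ x y ∩ closedBall 0 1).Nonempty)
    (hβ : dist (β : AddCircle (π / 2)) (transverse b y).arg ≤ π / 4 * (1 - azimuthCost y)) :
    ∃ w ∈ sixDirections b (17 / 10 * capParam x) β, tangentLength y < inner ℝ w y := by
  have hx : 1 ≤ ‖x‖ := hy.le.trans hyx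
  rcases lt_or_ge (tangentLength y) (b.repr y 0) with visible | invisible
  · exact ⟨b 0, axis_mem_sixDirections, by rwa [← b.repr_apply_apply]⟩
  have param_pos : 0 < capParam x := capParam_pos hx
  obtain ⟨w, hw, hle⟩ := exists_mem_sixDirections_le_inner (τ := 17 / 10 * capParam x)
    (by positivity) (by nlinarith [pi_pos, azimuthCost_nonneg hy.le]) hβ
  have norm_sq := norm_sq_eq_add_sq_norm_transverse b y
  have le_repr := le_repr_of_openSegment_inter_nonempty hb hx hy.le hxy
  refine ⟨w, hw, lt_of_lt_of_le ?_ hle⟩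
  rw [tangentLength_eq_capParam hy.le] at invisible le_repr ⊢
  rw [norm_eq_capParam hy.le] at norm_sq
  rw [tangentLength_eq_capParam hx, norm_eq_capParam hx] at le_repr
  rw [lt_div_iff₀ (by positivity)]
  have := tangentLength_lt_of_params param_pos (capParam_le_capParam hy.le hyx)
    (capParam_lt_one hy) (const_le_cos_azimuthCost hy.le) (cos_le_one _)
    (sub_mul_capParam_le_cos_azimuthCost hy.le) (norm_nonneg _) norm_sq.symm le_repr invisible
  linarith

theorem exists_sixDirections_forall_tangentLength_lt_inner {ι : Type*} [FiniteDimensional ℝ E]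
    (hE : Module.finrank ℝ E = 3) {S : Finset ι} (hS : S.Nonempty) {x : ι → E}
    (hx : ∀ i ∈ S, 1 < ‖x i‖)
    (hpair : (S : Set ι).Pairwise fun i j ↦
      (openSegment ℝ (x i) (x j) ∩ closedBall 0 1).Nonempty) :
    ∃ (b : OrthonormalBasis (Fin 3) ℝ E) (τ β : ℝ), 0 < τ ∧
      ∀ i ∈ S, ∃ w ∈ sixDirections b τ β, tangentLength (x i) < inner ℝ w (x i) := by
  classical
  borelize E
  have : Fact (0 < π / 2) := ⟨by positivity⟩
  obtain ⟨i, hi, hmax⟩ := S.exists_max_image (fun j ↦ ‖x j‖) hS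
  have norm_pos : 0 < ‖x i‖ := by linarith [hx i hi]
  obtain ⟨b, hb⟩ := exists_orthonormalBasis_apply_eq (ι := Fin 3) (c := -(‖x i‖⁻¹ • x i))
    (by simpa using hE) 0 (by simpa using norm_smul_inv_norm (𝕜 := ℝ) (norm_pos_iff.1 norm_pos))
  obtain ⟨β, hβ⟩ := exists_forall_dist_le_of_sum_lt_one
    (φ := fun j ↦ ((transverse b (x j)).arg : AddCircle (π / 2)))
    (fun j hj ↦ azimuthCost_nonneg (hx j (Finset.mem_of_mem_erase hj)).le)
    (sum_erase_azimuthCost_lt_one (fun j hj ↦ (hx j hj).le)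
      (sum_one_sub_inv_norm_le_two hE hx hpair) hi hmax)
  obtain ⟨β, rfl⟩ := QuotientAddGroup.mk_surjective β
  refine ⟨b, 17 / 10 * capParam (x i), β, mul_pos (by norm_num) (capParam_pos (hx i hi).le),
    fun j hj ↦ ?_⟩
  by_cases hji : j = i
  · subst hji
    refine ⟨-b 0, neg_axis_mem_sixDirections, ?_⟩
    rw [hb, neg_neg, real_inner_smul_left, real_inner_self_eq_norm_sq, sq,
      inv_mul_cancel_left₀ norm_pos.ne']
    exact tangentLength_lt_norm (hx j hj).le
  · refine exists_mem_sixDirections_tangentLength_lt_inner hb (hx j hj) (hmax j hj)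
      (hpair hi hj (Ne.symm hji)) ?_
    convert hβ j (Finset.mem_erase.2 ⟨hji, hj⟩) using 2
    ring

end Vertices

/-- For every cap body `K` in Euclidean 3-space, the illumination number of `K`
is at most 6. -/
theorem illumination_of_cap_bodies (K : Set (EuclideanSpace ℝ (Fin 3)))
    (m : ℕ) (hm : 0 < m) (x : Fin m → EuclideanSpace ℝ (Fin 3))
    (hx : ∀ i, 1 < ‖x i‖)
    (hK : K = ⋃ i, convexHull ℝ ({x i} ∪ closedBall 0 1))
    (hconv : Convex ℝ K) :
    illumNum K ≤ 6 := by
  obtain ⟨S, hS, hirr⟩ := exists_irredundant_biUnion_eq_iUnion fun i ↦ spike (x i)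
  obtain rfl : K = ⋃ i ∈ S, spike (x i) := hK.trans hS.symm
  have S_nonempty : S.Nonempty := by
    have : x ⟨0, hm⟩ ∈ ⋃ i ∈ S, spike (x i) := hS ▸ mem_iUnion_of_mem _ self_mem_spike
    obtain ⟨i, hi, -⟩ := mem_iUnion₂.1 this
    exact ⟨i, hi⟩
  have hpair := pairwise_openSegment_inter_closedBall_nonempty hconv hirr
  obtain ⟨b, τ, β, hτ, hvertex⟩ := exists_sixDirections_forall_tangentLength_lt_inner
    finrank_euclideanSpace_fin S_nonempty (fun i _ ↦ hx i) hpair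
  calc illumNum (⋃ i ∈ S, spike (x i)) ≤ (sixDirections b τ β).card :=
        illumNum_biUnion_spike_le (fun w ↦ norm_eq_one_of_mem_sixDirections) hvertex
          fun u ↦ exists_mem_sixDirections_inner_pos hτ
    _ ≤ 6 := card_sixDirections_le

end
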